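/- Let G = (U, W; E) be a finite bipartite graph possibly with parallel edges, with preference functions p_v for every vertex v, a matroid M_v on E(v) for every vertex v, a set C ⊆ U ∪ W of critical vertices, a set E_c ⊆ E of critical edges such that every critical edge is incident to at least one critical vertex, and reals 0 < γ_e^v < δ_e^v for every edge e and endpoint v of e. Then there exists a common independent set M such that (i) M is critical, (ii) no edge cγ-blocks M (so M is cγ-stable), and (iii) every cγ-stable common independent set N of the instance satisfies 2|N| ≤ 3|M|. -/

import Mathlib

open scoped Classical

/-- The finset `{x}` for `some x`, and `∅` for `none`. -/
def oset {E : Type*} : Option E → Finset E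
  | none => ∅
  | some x => {x}

/-- The preference value of an optional edge: `p(∅) = 0`. -/
def oval {E : Type*} (p : E → ℝ) : Option E → ℝ
  | none => 0
  | some x => p x

/-- `M` is a common independent set: `M ∩ E(v)` is independent in the matroid `M_v` of
every vertex `v`. -/
noncomputable def CommonIndep {U W E : Type*} (eu : E → U) (ew : E → W)
    (mU : U → Matroid E) (mW : W → Matroid E) (M : Finset E) : Prop :=
  (∀ u, (mU u).Indep ((M.filter (fun f => eu f = u) : Finset E) : Set E)) ∧
  (∀ w, (mW w).Indep ((M.filter (fun f => ew f = w) : Finset E) : Set E))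

/-- The number `Σ_{v ∈ C} |M(v) ∩ E_c|` of places of critical vertices filled by the
critical edges of `M`. -/
noncomputable def critPlaces {U W E : Type*} [DecidableEq E] (eu : E → U) (ew : E → W)
    (C : Finset (U ⊕ W)) (Ec : Finset E) (M : Finset E) : ℕ :=
  ∑ v ∈ C, ((M ∩ Ec).filter (fun f =>
    Sum.elim (fun u => eu f = u) (fun w => ew f = w) v)).card

/-- A common independent set `M` is critical if `Σ_{v ∈ C} |M(v) ∩ E_c|` is maximum among
all common independent sets. -/
noncomputable def IsCriticalCI {U W E : Type*} [DecidableEq E] (eu : E → U) (ew : E → W)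
    (mU : U → Matroid E) (mW : W → Matroid E) (C : Finset (U ⊕ W)) (Ec : Finset E)
    (M : Finset E) : Prop :=
  ∀ N : Finset E, CommonIndep eu ew mU mW N →
    critPlaces eu ew C Ec N ≤ critPlaces eu ew C Ec M

/-- The edge `e = (u, w) ∉ M` cγ-blocks the common independent set `M`. -/
noncomputable def CGBlocksCI {U W E : Type*} [DecidableEq E] (eu : E → U) (ew : E → W)
    (mU : U → Matroid E) (mW : W → Matroid E) (pU pW γU δU γW δW : E → ℝ)
    (C : Finset (U ⊕ W)) (Ec : Finset E) (M : Finset E) (e : E) : Prop :=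
  e ∉ M ∧ ∃ f g : Option E,
    (∀ f', f = some f' → f' ∈ M ∧ eu f' = eu e) ∧
    (∀ g', g = some g' → g' ∈ M ∧ ew g' = ew e) ∧
    CommonIndep eu ew mU mW (insert e (M \ (oset f ∪ oset g))) ∧
    IsCriticalCI eu ew mU mW C Ec (insert e (M \ (oset f ∪ oset g))) ∧
    (mU (eu e)).Indep
      ((insert e (M.filter (fun f' => eu f' = eu e) \ oset f) : Finset E) : Set E) ∧
    (mW (ew e)).Indep
      ((insert e (M.filter (fun f' => ew f' = ew e) \ oset g) : Finset E) : Set E) ∧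
    ((pU e - oval pU f ≥ γU e ∧ pW e - oval pW g ≥ δW e) ∨
     (pU e - oval pU f ≥ δU e ∧ pW e - oval pW g ≥ γW e))


section MatroidTools

variable {X : Type*}

theorem greedy_span [Finite X] {L : Type*} [LinearOrder L] (M : Matroid X) (hM : M.E = Set.univ)
    (r : X → L) (S : Set X) (e : X) (he : e ∈ S) :
    e ∈ M.closure {f | (f ∈ S ∧ f ∉ M.closure {g | g ∈ S ∧ r f < r g}) ∧ r e ≤ r f} := by
  have wf : WellFounded (fun a b : X => r b < r a) := by
    have : IsTrans X (fun a b : X => r b < r a) := ⟨fun a b c h1 h2 => lt_trans h2 h1⟩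
    have : Std.Irrefl (fun a b : X => r b < r a) := ⟨fun a h => lt_irrefl _ h⟩
    exact Finite.wellFounded_of_trans_of_irrefl _
  induction e using wf.induction with
  | _ e ih =>
    by_cases h : e ∈ M.closure {g | g ∈ S ∧ r e < r g}
    · refine M.closure_subset_closure_of_subset_closure ?_ h
      rintro g ⟨hg, hlt⟩
      refine M.closure_subset_closure ?_ (ih g hlt hg)
      rintro f ⟨hf, hle⟩
      exact ⟨hf, hlt.le.trans hle⟩
    · exact M.mem_closure_of_mem' ⟨⟨he, h⟩, le_rfl⟩ (by simp [hM])

theorem greedy_indep [Finite X] {L : Type*} [LinearOrder L] (M : Matroid X) (hM : M.E = Set.univ)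
    (r : X → L) (hr : Function.Injective r) (S : Set X) :
    M.Indep {f | f ∈ S ∧ f ∉ M.closure {g | g ∈ S ∧ r f < r g}} := by
  by_contra hcon
  rw [Matroid.not_indep_iff (by simp [hM])] at hcon
  obtain ⟨C, hCs, hC⟩ := hcon.exists_isCircuit_subset
  obtain ⟨e, heC, hmin⟩ := Set.exists_min_image C r (Set.toFinite C) hC.nonempty
  refine (hCs heC).2 (M.closure_subset_closure ?_ (hC.mem_closure_sdiff_singleton_of_mem heC))
  rintro f ⟨hfC, hfe⟩
  refine ⟨(hCs hfC).1, lt_of_le_of_ne (hmin f hfC) ?_⟩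
  intro h
  exact hfe (hr h).symm

theorem kernel_strict [Finite X] {L₁ L₂ : Type*} [LinearOrder L₁] [LinearOrder L₂]
    (M₁ M₂ : Matroid X) (h₁ : M₁.E = Set.univ) (h₂ : M₂.E = Set.univ)
    (r₁ : X → L₁) (r₂ : X → L₂) (hr₁ : Function.Injective r₁) (hr₂ : Function.Injective r₂) :
    ∃ K : Set X, M₁.Indep K ∧ M₂.Indep K ∧ ∀ e,
      e ∈ M₁.closure {f | f ∈ K ∧ r₁ e ≤ r₁ f} ∨ e ∈ M₂.closure {f | f ∈ K ∧ r₂ e ≤ r₂ f} := by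
  let R₁ : Set X → Set X := fun S => {e | e ∈ S ∧ e ∈ M₁.closure {g | g ∈ S ∧ r₁ e < r₁ g}}
  let R₂ : Set X → Set X := fun S => {e | e ∈ S ∧ e ∈ M₂.closure {g | g ∈ S ∧ r₂ e < r₂ g}}
  have m₁ : Monotone R₁ := by
    intro S T h e he
    refine ⟨h he.1, M₁.closure_subset_closure ?_ he.2⟩
    rintro g ⟨hg, hlt⟩
    exact ⟨h hg, hlt⟩
  have m₂ : Monotone R₂ := by
    intro S T h e he
    refine ⟨h he.1, M₂.closure_subset_closure ?_ he.2⟩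
    rintro g ⟨hg, hlt⟩
    exact ⟨h hg, hlt⟩
  let Φ : Set X →o Set X := ⟨fun S => (R₂ (R₁ S)ᶜ)ᶜ, fun S T h =>
    Set.compl_subset_compl.2 (m₂ (Set.compl_subset_compl.2 (m₁ h)))⟩
  obtain ⟨S, hS⟩ : ∃ S, (R₂ (R₁ S)ᶜ)ᶜ = S := ⟨Φ.lfp, Φ.map_lfp⟩
  obtain ⟨T, hT⟩ : ∃ T, T = (R₁ S)ᶜ := ⟨_, rfl⟩
  rw [← hT] at hS
  have k₁ : {f | f ∈ S ∧ f ∉ M₁.closure {g | g ∈ S ∧ r₁ f < r₁ g}} = S ∩ T := by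
    ext f
    rw [hT]
    simp only [R₁, Set.mem_ofPred_eq, Set.mem_inter_iff, Set.mem_compl_iff]
    tauto
  have k₂ : {f | f ∈ T ∧ f ∉ M₂.closure {g | g ∈ T ∧ r₂ f < r₂ g}} = S ∩ T := by
    ext f
    rw [← hS]
    simp only [R₂, Set.mem_ofPred_eq, Set.mem_inter_iff, Set.mem_compl_iff]
    tauto
  refine ⟨S ∩ T, k₁ ▸ greedy_indep M₁ h₁ r₁ hr₁ S, k₂ ▸ greedy_indep M₂ h₂ r₂ hr₂ T, fun e => ?_⟩
  by_cases he : e ∈ S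
  · left
    have := greedy_span M₁ h₁ r₁ S e he
    rw [← k₁]
    exact this
  · right
    have heT : e ∈ T := by
      rw [hT]
      exact fun h => he h.1
    have := greedy_span M₂ h₂ r₂ T e heT
    rw [← k₂]
    exact this

/-- Existence of a matroid kernel for two matroids with weak rankings (larger is better). -/
theorem kernel_weak [Finite X] {L₁ L₂ : Type*} [LinearOrder L₁] [LinearOrder L₂]
    (M₁ M₂ : Matroid X) (h₁ : M₁.E = Set.univ) (h₂ : M₂.E = Set.univ)
    (r₁ : X → L₁) (r₂ : X → L₂) :
    ∃ K : Set X, M₁.Indep K ∧ M₂.Indep K ∧ ∀ e,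
      e ∈ M₁.closure {f | f ∈ K ∧ r₁ e ≤ r₁ f} ∨ e ∈ M₂.closure {f | f ∈ K ∧ r₂ e ≤ r₂ f} := by
  obtain ⟨n, ⟨φ⟩⟩ := Finite.exists_equiv_fin X
  obtain ⟨K, hK₁, hK₂, hK⟩ := kernel_strict M₁ M₂ h₁ h₂
    (fun x => toLex (r₁ x, φ x)) (fun x => toLex (r₂ x, φ x))
    (fun x y h => by simpa using congrArg (fun z => (ofLex z).2) h)
    (fun x y h => by simpa using congrArg (fun z => (ofLex z).2) h)
  refine ⟨K, hK₁, hK₂, fun e => (hK e).imp (fun h => ?_) (fun h => ?_)⟩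
  · refine M₁.closure_subset_closure ?_ h
    rintro f ⟨hf, hle⟩
    exact ⟨hf, (Prod.Lex.monotone_fst _ _ hle)⟩
  · refine M₂.closure_subset_closure ?_ h
    rintro f ⟨hf, hle⟩
    exact ⟨hf, (Prod.Lex.monotone_fst _ _ hle)⟩

theorem card_le_of_subset_closure (M : Matroid X) (N A : Finset X)
    (hN : M.Indep (N : Set X)) (h : (N : Set X) ⊆ M.closure (A : Set X)) : N.card ≤ A.card := by
  have h1 := hN.encard_le_eRk_of_subset h
  rw [M.eRk_closure_eq] at h1
  have h2 := h1.trans (M.eRk_le_encard _)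
  rw [Set.encard_coe_eq_coe_finsetCard, Set.encard_coe_eq_coe_finsetCard] at h2
  exact_mod_cast h2

/-- If `N` is independent, and every `e ∈ N₁ ⊆ N` is spanned by the elements of `S` at least as
good as `e`, then many elements of `S` are exchangeable with a worse element of `N₁`. -/
theorem card_le_exchange [Finite X] {L : Type*} [LinearOrder L] (M : Matroid X)
    (hM : M.E = Set.univ) (N N₁ S : Finset X) (hN : M.Indep (N : Set X)) (hN₁ : N₁ ⊆ N)
    (ke km : X → L)
    (h : ∀ e ∈ N₁, e ∈ M.closure {m | m ∈ S ∧ ke e ≤ km m}) :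
    N₁.card ≤
      (S.filter (fun m => ∃ e ∈ N₁, ke e ≤ km m ∧ m ∉ M.closure ((N : Set X) \ {e}))).card := by
  set Γ := S.filter (fun m => ∃ e ∈ N₁, ke e ≤ km m ∧ m ∉ M.closure ((N : Set X) \ {e})) with hΓ
  have wf : WellFounded (fun a b : X => ke b < ke a) := by
    have : IsTrans X (fun a b : X => ke b < ke a) := ⟨fun a b c h1 h2 => lt_trans h2 h1⟩
    have : Std.Irrefl (fun a b : X => ke b < ke a) := ⟨fun a h => lt_irrefl _ h⟩
    exact Finite.wellFounded_of_trans_of_irrefl _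
  have claim : ∀ e, e ∈ N₁ → e ∈ M.closure ((Γ ∪ (N \ N₁) : Finset X) : Set X) := by
    intro e
    induction e using wf.induction with
    | _ e ih =>
      intro he
      refine M.closure_subset_closure_of_subset_closure ?_ (h e he)
      rintro m ⟨hmS, hem⟩
      by_cases hmΓ : m ∈ Γ
      · exact M.mem_closure_of_mem' (by simp [hmΓ]) (by simp [hM])
      have hm : ∀ e' ∈ N₁, ke e' ≤ km m → m ∈ M.closure ((N : Set X) \ {e'}) := by
        intro e' he' hle
        by_contra hcon
        exact hmΓ (Finset.mem_filter.2 ⟨hmS, e', he', hle, hcon⟩)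
      let Y : Set X := {e' | e' ∈ N₁ ∧ ke e' ≤ km m}
      have hY : m ∈ M.closure (⋂ y ∈ Y, ((N : Set X) \ {y})) := by
        rw [Matroid.closure_biInter_eq_biInter_closure_of_biUnion_indep
          (A := Y) ⟨e, he, hem⟩ (hN.subset (by simp))]
        simp only [Set.mem_iInter]
        exact fun y hy => hm y hy.1 hy.2
      refine M.closure_subset_closure_of_subset_closure ?_ hY
      intro z hz
      simp only [Set.mem_iInter] at hz
      have hzN : z ∈ N := (hz e ⟨he, hem⟩).1
      by_cases hz1 : z ∈ N₁
      · refine ih z ?_ hz1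
        by_contra hlt
        exact (hz z ⟨hz1, (not_lt.1 hlt).trans hem⟩).2 rfl
      · exact M.mem_closure_of_mem' (by simp [hzN, hz1]) (by simp [hM])
  have hle : N.card ≤ (Γ ∪ (N \ N₁)).card := by
    refine card_le_of_subset_closure M N _ hN ?_
    intro z hz
    by_cases hz1 : z ∈ N₁
    · exact claim z hz1
    · exact M.mem_closure_of_mem' (by simp [Finset.mem_coe.1 hz, hz1]) (by simp [hM])
  have h1 := Finset.card_union_le Γ (N \ N₁)
  have h2 := Finset.card_sdiff_add_card_eq_card hN₁
  omega

/-- The kernel theorem applied to copies `(e, i, j, s)` of the elements. -/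
theorem kernel_copies [Finite X] 
    (M₁ M₂ : Matroid X) (h₁ : M₁.E = Set.univ) (h₂ : M₂.E = Set.univ)
    (k₁ k₂ : X → ℕ → Fin 3 → ℕ ×ₗ ℝ ×ₗ ℕ)
    (V : X → ℕ → ℕ → Fin 3 → Prop) (B : ℕ) (hB : ∀ e i j s, V e i j s → i ≤ B ∧ j ≤ B)
    (hV : ∀ e, ∃ i j s, V e i j s) :
    ∃ (M : Finset X) (l₁ l₂ : X → ℕ) (t : X → Fin 3),
      M₁.Indep (M : Set X) ∧ M₂.Indep (M : Set X) ∧ (∀ m, V m (l₁ m) (l₂ m) (t m)) ∧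
      ∀ e i j s, V e i j s →
        e ∈ M₁.closure {m | m ∈ M ∧ k₁ e i s ≤ k₁ m (l₁ m) (t m)} ∨
        e ∈ M₂.closure {m | m ∈ M ∧ k₂ e j s ≤ k₂ m (l₂ m) (t m)} := by
  let Z := {x : X × ℕ × ℕ × Fin 3 // V x.1 x.2.1 x.2.2.1 x.2.2.2}
  have : Finite Z := by
    have hf : ((Set.univ : Set X) ×ˢ (Set.Iic B) ×ˢ (Set.Iic B) ×ˢ
        (Set.univ : Set (Fin 3))).Finite :=
      Set.finite_univ.prod ((Set.finite_Iic B).prod ((Set.finite_Iic B).prod Set.finite_univ))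
    have hs : {x : X × ℕ × ℕ × Fin 3 | V x.1 x.2.1 x.2.2.1 x.2.2.2}.Finite := by
      refine hf.subset ?_
      rintro ⟨e, i, j, s⟩ hx
      have := hB e i j s hx
      simp [this]
    exact hs.to_subtype
  let π : Z → X := fun x => x.1.1
  obtain ⟨K, hK₁, hK₂, hK⟩ := kernel_weak (M₁.comap π) (M₂.comap π) (by simp [h₁]) (by simp [h₂])
    (fun x => k₁ x.1.1 x.1.2.1 x.1.2.2.2) (fun x => k₂ x.1.1 x.1.2.2.1 x.1.2.2.2)
  rw [Matroid.comap_indep_iff] at hK₁ hK₂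
  have hinj := hK₁.2
  have hex : ∀ m, ∃ x : Z, π x = m ∧ (m ∈ π '' K → x ∈ K) := by
    intro m
    by_cases hm : m ∈ π '' K
    · obtain ⟨x, hx, rfl⟩ := hm
      exact ⟨x, rfl, fun _ => hx⟩
    · obtain ⟨i, j, s, h⟩ := hV m
      exact ⟨⟨(m, i, j, s), h⟩, rfl, fun h => absurd h hm⟩
  choose κ hκ hκK using hex
  have hκπ : ∀ x ∈ K, κ (π x) = x := fun x hx =>
    hinj (hκK _ ⟨x, hx, rfl⟩) hx (hκ _)
  refine ⟨(Set.toFinite (π '' K)).toFinset, fun m => (κ m).1.2.1, fun m => (κ m).1.2.2.1,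
    fun m => (κ m).1.2.2.2, by simpa using hK₁.1, by simpa using hK₂.1, ?_, ?_⟩
  · intro m
    have h := (κ m).2
    have h' : (κ m).1.1 = m := hκ m
    rw [h'] at h
    exact h
  · intro e i j s hv
    have := hK ⟨(e, i, j, s), hv⟩
    rw [Matroid.comap_closure_eq, Matroid.comap_closure_eq] at this
    refine this.imp (fun h => ?_) (fun h => ?_)
    · refine M₁.closure_subset_closure ?_ h
      rintro m ⟨x, ⟨hx, hle⟩, rfl⟩
      refine ⟨by simpa using ⟨x, hx, rfl⟩, ?_⟩
      beta_reduce
      rw [hκπ x hx]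
      exact hle
    · refine M₂.closure_subset_closure ?_ h
      rintro m ⟨x, ⟨hx, hle⟩, rfl⟩
      refine ⟨by simpa using ⟨x, hx, rfl⟩, ?_⟩
      beta_reduce
      rw [hκπ x hx]
      exact hle

end MatroidTools

section Core

/-- The amount by which the value of a copy of type `s` is reduced. -/
noncomputable def redv (s : Fin 3) (a b : ℝ) : ℝ := if s = 0 then 0 else if s = 1 then a else b

/-- The tie-breaking flag of a copy of type `s`. -/
def flg (s : Fin 3) : ℕ := if s = 0 then 0 else 1

/-- The ranking key of a copy on one side: level, then reduced value, then flag. -/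
noncomputable def ckey {E : Type*} (p a b : E → ℝ) (e : E) (i : ℕ) (s : Fin 3) : ℕ ×ₗ ℝ ×ₗ ℕ :=
  toLex (i, toLex (p e - redv s (a e) (b e), flg s))

theorem ckey_le {E : Type*} (p a b : E → ℝ) (e f : E) (i l : ℕ) (s t : Fin 3) :
    ckey p a b e i s ≤ ckey p a b f l t ↔ i < l ∨ i = l ∧
      (p e - redv s (a e) (b e) < p f - redv t (a f) (b f) ∨
        p e - redv s (a e) (b e) = p f - redv t (a f) (b f) ∧ flg s ≤ flg t) := by
  simp only [ckey, Prod.Lex.toLex_le_toLex]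

theorem redv_pos {s : Fin 3} (hs : s ≠ 0) {a b : ℝ} (ha : 0 < a) (hb : 0 < b) :
    0 < redv s a b := by
  unfold redv
  rw [if_neg hs]
  split_ifs <;> assumption

theorem redv_zero (a b : ℝ) : redv 0 a b = 0 := by simp [redv]

theorem ckey_not_le {E : Type*} {p a b : E → ℝ} (ha : ∀ e, 0 < a e) (hb : ∀ e, 0 < b e)
    {e f : E} {i l : ℕ} {s t : Fin 3} (hs : s ≠ 0) (hl : l ≤ i)
    (hp : p f ≤ p e - redv s (a e) (b e)) : ¬ ckey p a b e i s ≤ ckey p a b f l t := by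
  rw [ckey_le]
  by_cases ht : t = 0
  · subst ht
    rw [redv_zero]
    rintro (h | ⟨h, h' | ⟨h', hf⟩⟩)
    · omega
    · linarith
    · simp [flg, hs] at hf
  · have := redv_pos ht (ha f) (hb f)
    rintro (h | ⟨h, h' | ⟨h', hf⟩⟩)
    · omega
    · linarith
    · linarith

theorem ckey_level {E : Type*} {p a b : E → ℝ}
    {e f : E} {i l : ℕ} {s t : Fin 3} (h : ckey p a b e i s ≤ ckey p a b f l t) : i ≤ l := by
  rw [ckey_le] at h
  omega

theorem ckey_val {E : Type*} {p a b : E → ℝ}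
    {e f : E} {i l : ℕ} {t : Fin 3} (h : ckey p a b e i 0 ≤ ckey p a b f l t) (hl : l ≤ i) :
    p e ≤ p f - redv t (a f) (b f) := by
  rw [ckey_le, redv_zero] at h
  rcases h with h | ⟨h, h' | ⟨h', hf⟩⟩
  · omega
  · linarith
  · linarith

/-- Counting argument behind criticality. -/
theorem weight_le {E : Type*} (M₁ M₂ : Matroid E) (M N : Finset E) (c l₁ l₂ : E → ℕ) (B : ℕ)
    (hN₁ : M₁.Indep (N : Set E)) (hN₂ : M₂.Indep (N : Set E))
    (hc : ∀ e ∈ N, c e ≤ B) (hl₁ : ∀ m ∈ M, l₁ m ≤ B) (hl₂ : ∀ m ∈ M, l₂ m ≤ B)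
    (h : ∀ e ∈ N, ∀ i j, 1 ≤ i → 1 ≤ j → i + j = c e + 1 →
      e ∈ M₁.closure {m | m ∈ M ∧ i ≤ l₁ m} ∨ e ∈ M₂.closure {m | m ∈ M ∧ j ≤ l₂ m}) :
    ∑ e ∈ N, c e ≤ ∑ m ∈ M, (l₁ m + l₂ m) := by
  have side : ∀ (Q : Matroid E) (l : E → ℕ), Q.Indep (N : Set E) → (∀ m ∈ M, l m ≤ B) →
      ∑ e ∈ N, ((Finset.Icc 1 B).filter
        (fun i => e ∈ Q.closure {m | m ∈ M ∧ i ≤ l m})).card ≤ ∑ m ∈ M, l m := by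
    intro Q l hQ hl
    calc ∑ e ∈ N, ((Finset.Icc 1 B).filter
          (fun i => e ∈ Q.closure {m | m ∈ M ∧ i ≤ l m})).card
        = ∑ i ∈ Finset.Icc 1 B, (N.filter
          (fun e => e ∈ Q.closure {m | m ∈ M ∧ i ≤ l m})).card := by
          simp only [Finset.card_filter]
          exact Finset.sum_comm
      _ ≤ ∑ i ∈ Finset.Icc 1 B, (M.filter (fun m => i ≤ l m)).card := by
          refine Finset.sum_le_sum fun i _ => ?_
          refine card_le_of_subset_closure Q _ _ (hQ.subset (Finset.coe_subset.2 (Finset.filter_subset _ _))) ?_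
          intro e he
          have := (Finset.mem_filter.1 (Finset.mem_coe.1 he)).2
          refine Q.closure_subset_closure ?_ this
          rintro m ⟨hm, hi⟩
          simp [hm, hi]
      _ = ∑ m ∈ M, ((Finset.Icc 1 B).filter (fun i => i ≤ l m)).card := by
          simp only [Finset.card_filter]
          exact Finset.sum_comm
      _ ≤ ∑ m ∈ M, l m := by
          refine Finset.sum_le_sum fun m hm => ?_
          have : (Finset.Icc 1 B).filter (fun i => i ≤ l m) ⊆ Finset.Icc 1 (l m) := by
            intro i hi
            simp only [Finset.mem_filter, Finset.mem_Icc] at hi ⊢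
            omega
          simpa using Finset.card_le_card this
  have key : ∀ e ∈ N, c e ≤ ((Finset.Icc 1 B).filter
        (fun i => e ∈ M₁.closure {m | m ∈ M ∧ i ≤ l₁ m})).card +
      ((Finset.Icc 1 B).filter (fun i => e ∈ M₂.closure {m | m ∈ M ∧ i ≤ l₂ m})).card := by
    intro e he
    have hsub : Finset.Icc 1 (c e) ⊆ ((Finset.Icc 1 B).filter
        (fun i => e ∈ M₁.closure {m | m ∈ M ∧ i ≤ l₁ m})) ∪
      ((Finset.Icc 1 B).filter
        (fun i => e ∈ M₂.closure {m | m ∈ M ∧ i ≤ l₂ m})).image (fun j => c e + 1 - j) := by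
      intro i hi
      rw [Finset.mem_Icc] at hi
      have hB := hc e he
      rw [Finset.mem_union]
      rcases h e he i (c e + 1 - i) hi.1 (by omega) (by omega) with h' | h'
      · left
        rw [Finset.mem_filter, Finset.mem_Icc]
        exact ⟨by omega, h'⟩
      · right
        rw [Finset.mem_image]
        refine ⟨c e + 1 - i, ?_, by omega⟩
        rw [Finset.mem_filter, Finset.mem_Icc]
        exact ⟨by omega, h'⟩
    have h1 := Finset.card_le_card hsub
    rw [Nat.card_Icc, Nat.add_sub_cancel] at h1
    refine h1.trans ((Finset.card_union_le _ _).trans ?_)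
    exact Nat.add_le_add_left Finset.card_image_le _
  calc ∑ e ∈ N, c e ≤ _ := Finset.sum_le_sum key
    _ = _ := Finset.sum_add_distrib
    _ ≤ _ := Nat.add_le_add (side M₁ l₁ hN₁ hl₁) (side M₂ l₂ hN₂ hl₂)
    _ = _ := Finset.sum_add_distrib.symm

theorem core {E : Type*} [Fintype E] [DecidableEq E] (M₁ M₂ : Matroid E)
    (h₁ : M₁.E = Set.univ) (h₂ : M₂.E = Set.univ) (c : E → ℕ)
    (pU pW γU δU γW δW : E → ℝ)
    (hγU : ∀ e, 0 < γU e) (hδU : ∀ e, 0 < δU e)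
    (hγW : ∀ e, 0 < γW e) (hδW : ∀ e, 0 < δW e) :
    ∃ M : Finset E, M₁.Indep (M : Set E) ∧ M₂.Indep (M : Set E) ∧
      (∀ N : Finset E, M₁.Indep (N : Set E) → M₂.Indep (N : Set E) →
        ∑ e ∈ N, c e ≤ ∑ e ∈ M, c e) ∧
      (∀ e, e ∉ M → ∀ A B : Finset E, A ⊆ M → B ⊆ M →
        (A.card ≤ 1) → (B.card ≤ 1) →
        M₁.Indep (insert e ((M : Set E) \ (A : Set E))) →
        M₂.Indep (insert e ((M : Set E) \ (B : Set E))) →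
        ∑ x ∈ A ∪ B, c x ≤ c e →
        ((∀ f ∈ A, γU e ≤ pU e - pU f) ∧ (∀ g ∈ B, δW e ≤ pW e - pW g) ∨
          (∀ f ∈ A, δU e ≤ pU e - pU f) ∧ (∀ g ∈ B, γW e ≤ pW e - pW g)) → False) ∧
      (∀ N : Finset E, M₁.Indep (N : Set E) → M₂.Indep (N : Set E) →
        (∀ m, m ∉ N → ∀ f ∈ N, ∀ g ∈ N, m ∉ M₁.closure ((N : Set E) \ {f}) →
          m ∉ M₂.closure ((N : Set E) \ {g}) → c f + c g ≤ c m →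
          (c m ≤ c f + c g →
            (γU m ≤ pU m - pU f ∧ δW m ≤ pW m - pW g ∨
              δU m ≤ pU m - pU f ∧ γW m ≤ pW m - pW g)) → False) →
        2 * N.card ≤ 3 * M.card) := by
  obtain ⟨K, hK⟩ : ∃ K, K = 2 * Fintype.card E + 1 := ⟨_, rfl⟩
  let V : E → ℕ → ℕ → Fin 3 → Prop := fun e i j s =>
    (s = 0 ∧ i + j = K * c e + 1) ∨ (s ≠ 0 ∧ i + j = K * c e + 2 ∧ 1 ≤ i ∧ 1 ≤ j)
  have hVi : ∀ e i j s, V e i j s → i ≤ K * c e + 1 := by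
    rintro e i j s (h | h) <;> omega
  have hVj : ∀ e i j s, V e i j s → j ≤ K * c e + 1 := by
    rintro e i j s (h | h) <;> omega
  have hVs : ∀ e i j s, V e i j s → i + j ≤ K * c e + 2 := by
    rintro e i j s (h | h) <;> omega
  obtain ⟨B, hB⟩ : ∃ B, B = K * (∑ e, c e) + 1 := ⟨_, rfl⟩
  have hcB : ∀ e, K * c e + 1 ≤ B := by
    intro e
    have : c e ≤ ∑ e, c e := Finset.single_le_sum (fun _ _ => Nat.zero_le _) (Finset.mem_univ e)
    have := Nat.mul_le_mul_left K this
    omega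
  obtain ⟨M, l₁, l₂, t, hM₁, hM₂, hval, hdom⟩ := kernel_copies M₁ M₂ h₁ h₂
    (ckey pU γU δU) (ckey pW δW γW) V B
    (fun e i j s h => ⟨(hVi e i j s h).trans (hcB e), (hVj e i j s h).trans (hcB e)⟩)
    (fun e => ⟨0, K * c e + 1, 0, Or.inl ⟨rfl, by omega⟩⟩)
  refine ⟨M, hM₁, hM₂, ?_, ?_, ?_⟩
  · intro N hN₁ hN₂
    have hw := weight_le M₁ M₂ M N (fun e => K * c e) l₁ l₂ B hN₁ hN₂
      (fun e _ => (Nat.le_succ _).trans (hcB e))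
      (fun m _ => (hVi _ _ _ _ (hval m)).trans (hcB m))
      (fun m _ => (hVj _ _ _ _ (hval m)).trans (hcB m))
      (by
        intro e he i j hi hj hij
        refine (hdom e i j 0 (Or.inl ⟨rfl, hij⟩)).imp (fun h => ?_) (fun h => ?_)
        · refine M₁.closure_subset_closure ?_ h
          rintro m ⟨hm, hle⟩
          exact ⟨hm, ckey_level hle⟩
        · refine M₂.closure_subset_closure ?_ h
          rintro m ⟨hm, hle⟩
          exact ⟨hm, ckey_level hle⟩)
    have hw2 : ∑ m ∈ M, (l₁ m + l₂ m) ≤ ∑ m ∈ M, (K * c m + 2) :=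
      Finset.sum_le_sum fun m _ => hVs _ _ _ _ (hval m)
    rw [Finset.sum_add_distrib (f := fun m => K * c m), Finset.sum_const, smul_eq_mul,
      ← Finset.mul_sum] at hw2
    rw [← Finset.mul_sum] at hw
    have hcard : M.card ≤ Fintype.card E := Finset.card_le_univ M
    by_contra hlt
    have h3 : ∑ e ∈ M, c e + 1 ≤ ∑ e ∈ N, c e := by omega
    have h4 := Nat.mul_le_mul_left K h3
    rw [Nat.mul_add] at h4
    omega
  · intro e heM A B' hA hB' hA1 hB1 hI₁ hI₂ hcw hv
    obtain ⟨s, hs, hsU, hsW⟩ : ∃ s : Fin 3, s ≠ 0 ∧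
        (∀ f ∈ A, pU f ≤ pU e - redv s (γU e) (δU e)) ∧
        (∀ g ∈ B', pW g ≤ pW e - redv s (δW e) (γW e)) := by
      rcases hv with ⟨hu, hw⟩ | ⟨hu, hw⟩
      · refine ⟨1, by decide, fun f hf => ?_, fun g hg => ?_⟩
        · have := hu f hf
          simp only [redv]
          simp
          linarith
        · have := hw g hg
          simp only [redv]
          simp
          linarith
      · refine ⟨2, by decide, fun f hf => ?_, fun g hg => ?_⟩
        · have := hu f hf
          simp only [redv]
          simp
          linarith
        · have := hw g hg
          simp only [redv]
          simp
          linarith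
    obtain ⟨i, j, hi, hj, hij, hiA, hjB⟩ : ∃ i j, 1 ≤ i ∧ 1 ≤ j ∧ i + j = K * c e + 2 ∧
        (∀ f ∈ A, l₁ f ≤ i) ∧ (∀ g ∈ B', l₂ g ≤ j) := by
      have : Nonempty E := ⟨e⟩
      rcases Finset.card_le_one_iff_subset_singleton (s := A) |>.1 hA1 with ⟨f, hf⟩
      rcases Finset.card_le_one_iff_subset_singleton (s := B') |>.1 hB1 with ⟨g, hg⟩
      rw [Finset.subset_singleton_iff] at hf hg
      have f1 := hVi _ _ _ _ (hval f)
      have g1 := hVj _ _ _ _ (hval g)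
      have f2 := hVs _ _ _ _ (hval f)
      rcases hf with rfl | rfl <;> rcases hg with rfl | rfl
      · exact ⟨1, K * c e + 1, le_rfl, by omega, by omega, by simp, by simp⟩
      · have hc' := Nat.mul_le_mul_left K (show c g ≤ c e by simpa using hcw)
        exact ⟨1, K * c e + 1, le_rfl, by omega, by omega, by simp, by simp; omega⟩
      · have hc' := Nat.mul_le_mul_left K (show c f ≤ c e by simpa using hcw)
        exact ⟨K * c e + 1, 1, by omega, by omega, by omega, by simp; omega, by simp⟩
      · by_cases hfg : f = g
        · subst hfg
          have hc' := Nat.mul_le_mul_left K (show c f ≤ c e by simpa using hcw)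
          refine ⟨max (l₁ f) 1, K * c e + 2 - max (l₁ f) 1, by omega, by omega, by omega,
            by simp, ?_⟩
          simp only [Finset.mem_singleton, forall_eq]
          omega
        · have hc' := Nat.mul_le_mul_left K (show c f + c g ≤ c e by
            rw [Finset.sum_union (by simpa using hfg)] at hcw
            simpa using hcw)
          rw [Nat.mul_add] at hc'
          refine ⟨max (l₁ f) 1, K * c e + 2 - max (l₁ f) 1, by omega, by omega, by omega,
            by simp, ?_⟩
          simp only [Finset.mem_singleton, forall_eq]
          omega
    have notdom : ∀ (Q : Matroid E) (D : Finset E) (S : Set E),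
        Q.Indep (insert e ((M : Set E) \ (D : Set E))) →
        S ⊆ M → (∀ d ∈ D, d ∉ S) → e ∉ Q.closure S := by
      intro Q D S hQ hS hD hcl
      have := hQ.notMem_closure_sdiff_of_mem (Set.mem_insert _ _)
      refine this (Q.closure_subset_closure ?_ hcl)
      intro x hx
      refine ⟨Or.inr ⟨hS hx, fun hxD => hD x (by simpa using hxD) hx⟩, ?_⟩
      rintro rfl
      exact heM (by simpa using hS hx)
    rcases hdom e i j s (Or.inr ⟨hs, hij, hi, hj⟩) with h | h
    · refine notdom M₁ A _ hI₁ (fun x hx => hx.1) ?_ h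
      intro f hf hcon
      exact ckey_not_le hγU hδU hs (hiA f hf) (hsU f hf) hcon.2
    · refine notdom M₂ B' _ hI₂ (fun x hx => hx.1) ?_ h
      intro f hf hcon
      exact ckey_not_le hδW hγW hs (hjB f hf) (hsW f hf) hcon.2
  · intro N hN₁ hN₂ hst
    let N₁ := N.filter (fun e => e ∉ M₂.closure (M : Set E))
    let N₂ := N.filter (fun e => e ∉ M₁.closure (M : Set E))
    have e₁ := card_le_exchange M₁ h₁ N N₁ M hN₁ (Finset.filter_subset _ _)
      (fun e => ckey pU γU δU e (K * c e + 1) 0) (fun m => ckey pU γU δU m (l₁ m) (t m)) (by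
        intro e he
        refine (hdom e (K * c e + 1) 0 0 (Or.inl ⟨rfl, by omega⟩)).resolve_right ?_
        intro h
        exact (Finset.mem_filter.1 he).2 (M₂.closure_subset_closure (fun x hx => hx.1) h))
    have e₂ := card_le_exchange M₂ h₂ N N₂ M hN₂ (Finset.filter_subset _ _)
      (fun e => ckey pW δW γW e (K * c e + 1) 0) (fun m => ckey pW δW γW m (l₂ m) (t m)) (by
        intro e he
        refine (hdom e 0 (K * c e + 1) 0 (Or.inl ⟨rfl, by omega⟩)).resolve_left ?_
        intro h
        exact (Finset.mem_filter.1 he).2 (M₁.closure_subset_closure (fun x hx => hx.1) h))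
    have hdisj := fun (m : E) (hm₁ : m ∈ M.filter (fun m => ∃ e ∈ N₁,
        ckey pU γU δU e (K * c e + 1) 0 ≤ ckey pU γU δU m (l₁ m) (t m) ∧
        m ∉ M₁.closure ((N : Set E) \ {e}))) (hm₂ : m ∈ M.filter (fun m => ∃ e ∈ N₂,
        ckey pW δW γW e (K * c e + 1) 0 ≤ ckey pW δW γW m (l₂ m) (t m) ∧
        m ∉ M₂.closure ((N : Set E) \ {e}))) => (show False by
      obtain ⟨hmM, f, hf, hkf, hfcl⟩ := Finset.mem_filter.1 hm₁
      obtain ⟨-, g, hg, hkg, hgcl⟩ := Finset.mem_filter.1 hm₂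
      have hfN := Finset.mem_filter.1 hf
      have hgN := Finset.mem_filter.1 hg
      have hlf := ckey_level hkf
      have hlg := ckey_level hkg
      have hmv := hval m
      have hsum := hVs _ _ _ _ hmv
      have hmN : m ∉ N := by
        intro hmN
        by_cases hmf : m = f
        · subst hmf
          exact hfN.2 (M₂.mem_closure_of_mem' (by simpa using hmM) (by simp [h₂]))
        · exact hfcl (M₁.mem_closure_of_mem' ⟨by simpa using hmN, hmf⟩ (by simp [h₁]))
      have hcle : c f + c g ≤ c m := by
        have : K * (c f + c g) ≤ K * c m := by
          rw [Nat.mul_add]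
          omega
        exact Nat.le_of_mul_le_mul_left this (by omega)
      refine hst m hmN f hfN.1 g hgN.1 hfcl hgcl hcle ?_
      intro hcge
      have hceq : K * c m = K * c f + K * c g := by
        rw [← Nat.mul_add, le_antisymm hcge hcle]
      have hvf := ckey_val hkf (by omega)
      have hvg := ckey_val hkg (by omega)
      have ht : t m ≠ 0 := by
        intro ht
        rcases hmv with h | h
        · omega
        · exact h.1 ht
      by_cases ht1 : t m = 1
      · left
        simp only [redv, ht1] at hvf hvg
        simp at hvf hvg
        constructor <;> linarith
      · right
        simp only [redv, if_neg ht, if_neg ht1] at hvf hvg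
        constructor <;> linarith)
    have hun : ∀ G₁ G₂ : Finset E, G₁ ⊆ M → G₂ ⊆ M → (∀ m, m ∈ G₁ → m ∈ G₂ → False) →
        G₁.card + G₂.card ≤ M.card := by
      intro G₁ G₂ hG₁ hG₂ hd
      rw [← Finset.card_union_of_disjoint (Finset.disjoint_left.2 hd)]
      exact Finset.card_le_card (Finset.union_subset hG₁ hG₂)
    have hun' := hun _ _ (Finset.filter_subset _ _) (Finset.filter_subset _ _) hdisj
    have f₁ : (N.filter (fun e => e ∈ M₁.closure (M : Set E))).card ≤ M.card :=
      card_le_of_subset_closure M₁ _ _ (hN₁.subset (Finset.coe_subset.2 (Finset.filter_subset _ _))) (by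
        intro x hx
        exact (Finset.mem_filter.1 (Finset.mem_coe.1 hx)).2)
    have f₂ : (N.filter (fun e => e ∈ M₂.closure (M : Set E))).card ≤ M.card :=
      card_le_of_subset_closure M₂ _ _ (hN₂.subset (Finset.coe_subset.2 (Finset.filter_subset _ _))) (by
        intro x hx
        exact (Finset.mem_filter.1 (Finset.mem_coe.1 hx)).2)
    have g₁ := Finset.card_filter_add_card_filter_not (s := N)
      (fun e => e ∈ M₁.closure (M : Set E))
    have g₂ := Finset.card_filter_add_card_filter_not (s := N)
      (fun e => e ∈ M₂.closure (M : Set E))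
    simp only [N₁, N₂] at e₁ e₂ hun'
    omega

end Core

section Translate

theorem exists_sum_matroid {U E : Type*} (eu : E → U) (mU : U → Matroid E)
    (hmU : ∀ u, (mU u).E = {f | eu f = u}) :
    ∃ Q : Matroid E, Q.E = Set.univ ∧
      ∀ I : Set E, Q.Indep I ↔ ∀ u, (mU u).Indep (I ∩ {f | eu f = u}) := by
  have hd : Pairwise (Function.onFun Disjoint fun u => (mU u).E) := by
    intro u v huv
    simp only [Function.onFun, hmU]
    rw [Set.disjoint_left]
    rintro f hf hf'
    exact huv (Eq.trans (Eq.symm hf) hf')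
  have hun : (⋃ u, (mU u).E) = Set.univ := by
    ext f
    simp [hmU]
  refine ⟨Matroid.disjointSigma mU hd, by rw [Matroid.disjointSigma_ground_eq, hun], fun I => ?_⟩
  rw [Matroid.disjointSigma_indep_iff, hun]
  simp [hmU]

theorem coe_filter_fiber {U E : Type*} (eu : E → U) (M : Finset E) (u : U) :
    ((M.filter (fun f => eu f = u) : Finset E) : Set E) = (M : Set E) ∩ {f | eu f = u} := by
  ext f
  simp

theorem indep_insert_of_local {U E : Type*} [DecidableEq E] (eu : E → U) (mU : U → Matroid E)
    (Q : Matroid E) (hQ : ∀ I : Set E, Q.Indep I ↔ ∀ u, (mU u).Indep (I ∩ {f | eu f = u}))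
    (N D : Finset E) (hN : Q.Indep (N : Set E)) (e : E)
    (h : (mU (eu e)).Indep
      ((insert e (N.filter (fun f' => eu f' = eu e) \ D) : Finset E) : Set E)) :
    Q.Indep (insert e ((N : Set E) \ (D : Set E))) := by
  rw [hQ] at hN ⊢
  intro u
  by_cases hu : u = eu e
  · subst hu
    refine h.subset ?_
    rintro x ⟨hx, hxu⟩
    rcases hx with rfl | ⟨hx, hxD⟩
    · simp
    · have hxu' : eu x = eu e := hxu
      simp only [Finset.coe_insert, Finset.coe_sdiff, Finset.coe_filter]
      exact Or.inr ⟨⟨by simpa using hx, hxu'⟩, hxD⟩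
  · refine (hN u).subset ?_
    rintro x ⟨hx, hxu⟩
    rcases hx with rfl | ⟨hx, hxD⟩
    · exact absurd (Eq.symm hxu) hu
    · exact ⟨hx, hxu⟩

theorem local_of_indep_insert {U E : Type*} [DecidableEq E] (eu : E → U) (mU : U → Matroid E)
    (Q : Matroid E) (hQ : ∀ I : Set E, Q.Indep I ↔ ∀ u, (mU u).Indep (I ∩ {f | eu f = u}))
    (N D : Finset E) (e : E) (h : Q.Indep (insert e ((N : Set E) \ (D : Set E)))) :
    (mU (eu e)).Indep
      ((insert e (N.filter (fun f' => eu f' = eu e) \ D) : Finset E) : Set E) := by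
  rw [hQ] at h
  refine (h (eu e)).subset ?_
  intro x hx
  simp only [Finset.coe_insert, Finset.coe_sdiff, Finset.coe_filter] at hx
  rcases hx with rfl | ⟨⟨hx, hxu⟩, hxD⟩
  · exact ⟨Or.inl rfl, rfl⟩
  · exact ⟨Or.inr ⟨by simpa using hx, hxD⟩, hxu⟩

theorem exchange_side {U E : Type*} [DecidableEq E] (eu : E → U) (mU : U → Matroid E)
    (Q : Matroid E) (hE : Q.E = Set.univ)
    (hQ : ∀ I : Set E, Q.Indep I ↔ ∀ u, (mU u).Indep (I ∩ {f | eu f = u}))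
    (p : E → ℝ) (hp : ∀ e, 0 ≤ p e)
    (N : Finset E) (hN : Q.Indep (N : Set E)) (m f : E) (hf : f ∈ N)
    (hm : m ∉ Q.closure ((N : Set E) \ {f})) :
    ∃ o : Option E, (∀ x, o = some x → x ∈ N ∧ eu x = eu m) ∧
      Q.Indep (insert m ((N : Set E) \ (oset o : Set E))) ∧ oval p o ≤ p f ∧ oset o ⊆ {f} := by
  have hI : Q.Indep (insert m ((N : Set E) \ {f})) :=
    ((hN.subset Set.sdiff_subset).notMem_closure_iff (by simp [hE])).1 hm |>.1
  by_cases hfm : eu f = eu m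
  · refine ⟨some f, ?_, by simpa [oset] using hI, le_rfl, by simp [oset]⟩
    rintro x hx
    cases hx
    exact ⟨hf, hfm⟩
  · refine ⟨none, by simp, ?_, hp f, by simp [oset]⟩
    rw [hQ] at hI hN ⊢
    intro u
    by_cases hu : u = eu m
    · subst hu
      refine (hI (eu m)).subset ?_
      rintro x ⟨hx, hxu⟩
      refine ⟨?_, hxu⟩
      rcases hx with rfl | ⟨hx, -⟩
      · exact Or.inl rfl
      · refine Or.inr ⟨hx, ?_⟩
        rintro rfl
        exact hfm hxu
    · refine (hN u).subset ?_
      rintro x ⟨hx, hxu⟩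
      rcases hx with rfl | ⟨hx, -⟩
      · exact absurd (Eq.symm hxu) hu
      · exact ⟨hx, hxu⟩

/-- The number of critical places filled by a single edge. -/
noncomputable def edgeWeight {U W E : Type*} (eu : E → U) (ew : E → W)
    (C : Finset (U ⊕ W)) (Ec : Finset E) (e : E) : ℕ :=
  if e ∈ Ec then
    (C.filter (fun v => Sum.elim (fun u => eu e = u) (fun w => ew e = w) v)).card else 0

theorem critPlaces_eq {U W E : Type*} [DecidableEq E] (eu : E → U) (ew : E → W)
    (C : Finset (U ⊕ W)) (Ec : Finset E) (M : Finset E) :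
    critPlaces eu ew C Ec M = ∑ e ∈ M, edgeWeight eu ew C Ec e := by
  unfold critPlaces edgeWeight
  simp only [Finset.card_filter]
  rw [Finset.sum_comm, ← Finset.sum_filter, Finset.filter_mem_eq_inter]

theorem sum_exchange {E : Type*} [DecidableEq E] (c : E → ℕ) (M D : Finset E) (hD : D ⊆ M)
    (e : E) (he : e ∉ M) :
    ∑ x ∈ insert e (M \ D), c x + ∑ x ∈ D, c x = ∑ x ∈ M, c x + c e := by
  rw [Finset.sum_insert (fun h => he (Finset.mem_sdiff.1 h).1)]
  have := Finset.sum_sdiff (f := c) hD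
  omega

theorem oset_card {E : Type*} (o : Option E) : (oset o).card ≤ 1 := by
  cases o <;> simp [oset]

theorem mem_oset {E : Type*} (o : Option E) (x : E) : x ∈ oset o ↔ o = some x := by
  cases o with
  | none => simp [oset]
  | some y =>
    simp [oset]
    exact eq_comm

end Translate

/-- For every finite bipartite multigraph with preference functions, a
matroid `M_v` on `E(v)` for each vertex `v`, critical vertices `C`, critical edges `E_c`
(each incident to a critical vertex) and reals `0 < γ_e^v < δ_e^v`, there is a cγ-stable
common independent set `M` (critical and with no cγ-blocking edge) such that every
cγ-stable common independent set `N` satisfies `2|N| ≤ 3|M|`. -/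
theorem exists_cgamma_stable_common_independent_three_halves {U W E : Type*} [Fintype U]
    [Fintype W] [Fintype E] [DecidableEq E]
    (eu : E → U) (ew : E → W) (pU pW : E → ℝ)
    (hpU : ∀ e, 0 ≤ pU e) (hpW : ∀ e, 0 ≤ pW e)
    (mU : U → Matroid E) (mW : W → Matroid E)
    (hmU : ∀ u, (mU u).E = {f | eu f = u}) (hmW : ∀ w, (mW w).E = {f | ew f = w})
    (C : Finset (U ⊕ W)) (Ec : Finset E)
    (hEc : ∀ e ∈ Ec, Sum.inl (eu e) ∈ C ∨ Sum.inr (ew e) ∈ C)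
    (γU δU γW δW : E → ℝ)
    (hγU : ∀ e, 0 < γU e) (hγδU : ∀ e, γU e < δU e)
    (hγW : ∀ e, 0 < γW e) (hγδW : ∀ e, γW e < δW e) :
    ∃ M : Finset E, CommonIndep eu ew mU mW M ∧ IsCriticalCI eu ew mU mW C Ec M ∧
      (∀ e, ¬ CGBlocksCI eu ew mU mW pU pW γU δU γW δW C Ec M e) ∧
      (∀ N : Finset E, CommonIndep eu ew mU mW N → IsCriticalCI eu ew mU mW C Ec N →
        (∀ e, ¬ CGBlocksCI eu ew mU mW pU pW γU δU γW δW C Ec N e) →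
        2 * N.card ≤ 3 * M.card) := by
  obtain ⟨Q₁, hE₁, hQ₁⟩ := exists_sum_matroid eu mU hmU
  obtain ⟨Q₂, hE₂, hQ₂⟩ := exists_sum_matroid ew mW hmW
  have hCI : ∀ M : Finset E, CommonIndep eu ew mU mW M ↔
      Q₁.Indep (M : Set E) ∧ Q₂.Indep (M : Set E) := by
    intro M
    unfold CommonIndep
    rw [hQ₁, hQ₂]
    simp only [coe_filter_fiber]
  obtain ⟨M, hM₁, hM₂, hcrit, hstab, happ⟩ := core Q₁ Q₂ hE₁ hE₂ (edgeWeight eu ew C Ec)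
    pU pW γU δU γW δW hγU (fun e => (hγU e).trans (hγδU e)) hγW (fun e => (hγW e).trans (hγδW e))
  refine ⟨M, (hCI M).2 ⟨hM₁, hM₂⟩, ?_, ?_, ?_⟩
  · intro N hN
    rw [critPlaces_eq, critPlaces_eq]
    exact hcrit N ((hCI N).1 hN).1 ((hCI N).1 hN).2
  · rintro e ⟨heM, f, g, hf, hg, -, hcr, hIU, hIW, hv⟩
    have hfM : oset f ⊆ M := fun x hx => (hf x ((mem_oset f x).1 hx)).1
    have hgM : oset g ⊆ M := fun x hx => (hg x ((mem_oset g x).1 hx)).1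
    refine hstab e heM (oset f) (oset g) hfM hgM (oset_card f) (oset_card g)
      (indep_insert_of_local eu mU Q₁ hQ₁ M _ hM₁ e hIU)
      (indep_insert_of_local ew mW Q₂ hQ₂ M _ hM₂ e hIW) ?_ ?_
    · have h1 := hcr M ((hCI M).2 ⟨hM₁, hM₂⟩)
      rw [critPlaces_eq, critPlaces_eq] at h1
      have h2 := sum_exchange (edgeWeight eu ew C Ec) M (oset f ∪ oset g)
        (Finset.union_subset hfM hgM) e heM
      omega
    · have hval : ∀ (o : Option E) (p : E → ℝ), ∀ x ∈ oset o, oval p o = p x := by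
        intro o p x hx
        rw [(mem_oset o x).1 hx]
        rfl
      refine hv.imp (fun h => ⟨fun x hx => ?_, fun x hx => ?_⟩)
        (fun h => ⟨fun x hx => ?_, fun x hx => ?_⟩)
      · rw [← hval f pU x hx]
        exact h.1
      · rw [← hval g pW x hx]
        exact h.2
      · rw [← hval f pU x hx]
        exact h.1
      · rw [← hval g pW x hx]
        exact h.2
  · intro N hN hNc hNs
    obtain ⟨hN₁, hN₂⟩ := (hCI N).1 hN
    refine happ N hN₁ hN₂ ?_
    intro m hmN f hf g hg hfcl hgcl hcle hv
    obtain ⟨a, haN, haI, hap, haf⟩ := exchange_side eu mU Q₁ hE₁ hQ₁ pU hpU N hN₁ m f hf hfcl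
    obtain ⟨b, hbN, hbI, hbp, hbg⟩ := exchange_side ew mW Q₂ hE₂ hQ₂ pW hpW N hN₂ m g hg hgcl
    have haM : oset a ⊆ N := fun x hx => (haN x ((mem_oset a x).1 hx)).1
    have hbM : oset b ⊆ N := fun x hx => (hbN x ((mem_oset b x).1 hx)).1
    have hsum := sum_exchange (edgeWeight eu ew C Ec) N (oset a ∪ oset b)
      (Finset.union_subset haM hbM) m hmN
    have hle : ∑ x ∈ oset a ∪ oset b, edgeWeight eu ew C Ec x ≤
        edgeWeight eu ew C Ec f + edgeWeight eu ew C Ec g := by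
      have h1 := Finset.sum_union_inter (s₁ := oset a) (s₂ := oset b)
        (f := edgeWeight eu ew C Ec)
      have h2 := Finset.sum_le_sum_of_subset (f := edgeWeight eu ew C Ec) haf
      have h3 := Finset.sum_le_sum_of_subset (f := edgeWeight eu ew C Ec) hbg
      rw [Finset.sum_singleton] at h2 h3
      omega
    have hnew : CommonIndep eu ew mU mW (insert m (N \ (oset a ∪ oset b))) := by
      rw [hCI]
      refine ⟨haI.subset ?_, hbI.subset ?_⟩
      · rw [Finset.coe_insert, Finset.coe_sdiff, Finset.coe_union]
        exact Set.insert_subset_insert (Set.sdiff_subset_sdiff_right Set.subset_union_left)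
      · rw [Finset.coe_insert, Finset.coe_sdiff, Finset.coe_union]
        exact Set.insert_subset_insert (Set.sdiff_subset_sdiff_right Set.subset_union_right)
    have hnc := hNc _ hnew
    rw [critPlaces_eq, critPlaces_eq] at hnc
    refine hNs m ⟨hmN, a, b, haN, hbN, hnew, ?_,
      local_of_indep_insert eu mU Q₁ hQ₁ N _ m haI,
      local_of_indep_insert ew mW Q₂ hQ₂ N _ m hbI, ?_⟩
    · intro N' hN'
      refine (hNc N' hN').trans ?_
      rw [critPlaces_eq, critPlaces_eq]
      omega
    · rcases hv (by omega) with ⟨h1, h2⟩ | ⟨h1, h2⟩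
      · left
        constructor <;> linarith
      · right
        constructor <;> linarith
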